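/- Let N ∈ M_{2n}(ℂ) be normal with NN⋆ = N⋆N = 0, where N⋆ = JᵀNᴴJ and J = J_{2n}, and set A = N − N⋆. Then: (a) rank(N) ≤ n; (b) im(N) and im(N⋆) are neutral subspaces for the form xᴴJy and are invariant under A; (c) if λ ≠ 0 is an eigenvalue of N with eigenvector v, then Av = λv, so σ(N) \ {0} ⊆ σ(A). -/

import Mathlib

open Matrix

/-- The matrix `J_{2n} = [[0, I], [-I, 0]]`. -/
def Jmat (n : ℕ) : Matrix (Fin n ⊕ Fin n) (Fin n ⊕ Fin n) ℂ :=
  Matrix.fromBlocks 0 1 (-1) 0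

theorem Jmat_mul_transpose (n : ℕ) : Jmat n * (Jmat n)ᵀ = 1 := by
  simp [Jmat, fromBlocks_transpose, fromBlocks_multiply]

theorem Jmat_transpose_mul (n : ℕ) : (Jmat n)ᵀ * Jmat n = 1 := by
  simp [Jmat, fromBlocks_transpose, fromBlocks_multiply]

theorem Jmat_transpose (n : ℕ) : (Jmat n)ᵀ = -Jmat n := by
  simp [Jmat, fromBlocks_transpose, fromBlocks_neg]

theorem Jmat_conjTranspose (n : ℕ) : (Jmat n)ᴴ = (Jmat n)ᵀ := by
  simp [Jmat, fromBlocks_transpose, fromBlocks_conjTranspose]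

theorem isUnit_det_Jmat (n : ℕ) : IsUnit (Jmat n).det :=
  isUnit_det_of_right_inverse (Jmat_mul_transpose n)

/-- If `Mᴴ * K * M = 0`, the range of `M` is neutral for the form defined by `K`. -/
theorem star_mulVec_dotProduct_mulVec_eq_zero {m : Type*} [Fintype m] {M K : Matrix m m ℂ}
    (h : Mᴴ * K * M = 0) (x y : m → ℂ) : star (M *ᵥ x) ⬝ᵥ K *ᵥ (M *ᵥ y) = 0 := by
  rw [star_mulVec, ← dotProduct_mulVec, mulVec_mulVec, mulVec_mulVec, h,
    zero_mulVec, dotProduct_zero]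

open scoped ComplexOrder in
theorem rank_Jmat_transpose_mul_conjTranspose_mul_Jmat {n : ℕ}
    (N : Matrix (Fin n ⊕ Fin n) (Fin n ⊕ Fin n) ℂ) :
    ((Jmat n)ᵀ * Nᴴ * Jmat n).rank = N.rank := by
  rw [rank_mul_eq_left_of_isUnit_det _ _ (isUnit_det_Jmat n),
    rank_mul_eq_right_of_isUnit_det _ _ (by simpa using isUnit_det_Jmat n),
    rank_conjTranspose]

theorem stmt18 (n : ℕ) (N : Matrix (Fin n ⊕ Fin n) (Fin n ⊕ Fin n) ℂ)
    (hnorm : Nᴴ * N = N * Nᴴ)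
    (h1 : N * ((Jmat n)ᵀ * Nᴴ * Jmat n) = 0)
    (h2 : ((Jmat n)ᵀ * Nᴴ * Jmat n) * N = 0) :
    N.rank ≤ n ∧
    (∀ x y : Fin n ⊕ Fin n → ℂ,
      star (N.mulVec x) ⬝ᵥ (Jmat n).mulVec (N.mulVec y) = 0) ∧
    (∀ x y : Fin n ⊕ Fin n → ℂ,
      star (((Jmat n)ᵀ * Nᴴ * Jmat n).mulVec x) ⬝ᵥ
        (Jmat n).mulVec (((Jmat n)ᵀ * Nᴴ * Jmat n).mulVec y) = 0) ∧
    (∀ x : Fin n ⊕ Fin n → ℂ, ∃ z : Fin n ⊕ Fin n → ℂ,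
      (N - (Jmat n)ᵀ * Nᴴ * Jmat n).mulVec (N.mulVec x) = N.mulVec z) ∧
    (∀ x : Fin n ⊕ Fin n → ℂ, ∃ z : Fin n ⊕ Fin n → ℂ,
      (N - (Jmat n)ᵀ * Nᴴ * Jmat n).mulVec (((Jmat n)ᵀ * Nᴴ * Jmat n).mulVec x)
        = ((Jmat n)ᵀ * Nᴴ * Jmat n).mulVec z) ∧
    (∀ (lam : ℂ) (v : Fin n ⊕ Fin n → ℂ), v ≠ 0 → lam ≠ 0 →
      N.mulVec v = lam • v →
      (N - (Jmat n)ᵀ * Nᴴ * Jmat n).mulVec v = lam • v) := by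
  have hNN : Nᴴ * Jmat n * N = 0 := by
    simpa only [← Matrix.mul_assoc, Jmat_mul_transpose, Matrix.one_mul, Matrix.mul_zero]
      using congrArg (Jmat n * ·) h2
  have hstar : ((Jmat n)ᵀ * Nᴴ * Jmat n)ᴴ * Jmat n * ((Jmat n)ᵀ * Nᴴ * Jmat n) = 0 := by
    have hconj : ((Jmat n)ᵀ * Nᴴ * Jmat n)ᴴ = (Jmat n)ᵀ * N * Jmat n := by
      rw [← Jmat_conjTranspose]
      simp [conjTranspose_mul, Matrix.mul_assoc]
    have hJJ : Jmat n * Jmat n = -1 := by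
      rw [← Jmat_transpose_mul n, Jmat_transpose, Matrix.neg_mul, neg_neg]
    rw [hconj, Matrix.mul_assoc ((Jmat n)ᵀ * N), hJJ, Matrix.mul_neg, Matrix.mul_one,
      Matrix.neg_mul, Matrix.mul_assoc, h1, Matrix.mul_zero, neg_zero]
  refine ⟨?_, star_mulVec_dotProduct_mulVec_eq_zero hNN,
    star_mulVec_dotProduct_mulVec_eq_zero hstar, fun x => ⟨N *ᵥ x, ?_⟩,
    fun x => ⟨-(((Jmat n)ᵀ * Nᴴ * Jmat n) *ᵥ x), ?_⟩, ?_⟩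
  · have := rank_add_rank_le_card_of_mul_eq_zero h1
    rw [rank_Jmat_transpose_mul_conjTranspose_mul_Jmat, Fintype.card_sum, Fintype.card_fin] at this
    omega
  · rw [sub_mulVec, mulVec_mulVec _ _ N, mulVec_mulVec _ _ N, h2, zero_mulVec, sub_zero]
  · rw [sub_mulVec, mulVec_mulVec _ N, h1, zero_mulVec, zero_sub, mulVec_neg]
  · intro lam v _ hlam hv
    have hker : ((Jmat n)ᵀ * Nᴴ * Jmat n) *ᵥ v = 0 := by
      have h := congrArg (((Jmat n)ᵀ * Nᴴ * Jmat n) *ᵥ ·) hv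
      simp only [mulVec_mulVec, h2, zero_mulVec, mulVec_smul] at h
      exact (smul_eq_zero.mp h.symm).resolve_left hlam
    rw [sub_mulVec, hker, sub_zero, hv]
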